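/- Let Γ be a distance-regular graph with classical parameters (D, b, α, β), D ≥ 4, and intersection numbers a₁ = 0 and a₂ ≠ 0. Fix vertices x, y with ∂(x,y) = 3, set C = {z ∈ Γ₃(x) : B(x,z) = B(x,y)} and Δ = [x,C] = {v ∈ X : ∃ z ∈ C with ∂(x,v)+∂(v,z)=∂(x,z)}. Then B(x,y) ∩ Δ = ∅ and Γ₁(x) ∩ Δ = C(x,y) ∪ A(x,y); in particular |Γ₁(x) ∩ Δ| = a₃ + c₃. -/

import Mathlib

/-!
Common definitions: distance-regular graphs (via an intersection-number function `p`),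
classical parameters, and the sets `B(x,y)`, `A(x,y)`, `C(x,y)`.
The distance `∂` is `SimpleGraph.dist`.
-/

variable {V : Type*}

/-- `Γ` is distance-regular with intersection numbers `p h i j = p^h_{ij}`
(for indices up to the diameter `D`). -/
def SimpleGraph.IsDistRegularWith (G : SimpleGraph V) (D : ℕ) (p : ℕ → ℕ → ℕ → ℕ) : Prop :=
  ∀ h i j : ℕ, h ≤ D → i ≤ D → j ≤ D → ∀ x y : V, G.dist x y = h →
    {z : V | G.dist x z = i ∧ G.dist y z = j}.ncard = p h i j

/-- The Gaussian bracket `[i] = 1 + b + b² + ⋯ + b^{i-1}`. -/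
def gaussBracket (b : ℝ) (i : ℕ) : ℝ := ∑ k ∈ Finset.range i, b ^ k

/-- A distance-regular graph with intersection numbers `p` has classical parameters
`(D, b, α, β)`: `b ∉ {0, -1}`, `c_i = [i](1 + α[i-1])` and `b_i = ([D]-[i])(β - α[i])`
for `0 ≤ i ≤ D`, where `c_i = p^i_{1,i-1}` and `b_i = p^i_{1,i+1}`. -/
def HasClassicalParams (D : ℕ) (p : ℕ → ℕ → ℕ → ℕ) (b α β : ℝ) : Prop :=
  b ≠ 0 ∧ b ≠ -1 ∧
    (∀ i ≤ D, (p i 1 (i - 1) : ℝ) = gaussBracket b i * (1 + α * gaussBracket b (i - 1))) ∧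
    (∀ i ≤ D, (p i 1 (i + 1) : ℝ) =
      (gaussBracket b D - gaussBracket b i) * (β - α * gaussBracket b i))

/-- `B(x,y) = Γ₁(x) ∩ Γ_{∂(x,y)+1}(y)`. -/
def Bset (G : SimpleGraph V) (x y : V) : Set V :=
  {v | G.dist x v = 1 ∧ G.dist y v = G.dist x y + 1}

/-- `A(x,y) = Γ₁(x) ∩ Γ_{∂(x,y)}(y)`. -/
def Aset (G : SimpleGraph V) (x y : V) : Set V :=
  {v | G.dist x v = 1 ∧ G.dist y v = G.dist x y}

/-- `C(x,y) = Γ₁(x) ∩ Γ_{∂(x,y)-1}(y)`. -/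
def Cset (G : SimpleGraph V) (x y : V) : Set V :=
  {v | G.dist x v = 1 ∧ G.dist y v = G.dist x y - 1}

/-- `C = {z ∈ Γ₃(x) : B(x,z) = B(x,y)}`. -/
def Cclass (G : SimpleGraph V) (x y : V) : Set V :=
  {z | G.dist x z = 3 ∧ Bset G x z = Bset G x y}

/-- `Δ = [x, C] = {v : ∃ z ∈ C, ∂(x,v) + ∂(v,z) = ∂(x,z)}`. -/
def Delta (G : SimpleGraph V) (x y : V) : Set V :=
  {v | ∃ z ∈ Cclass G x y, G.dist x v + G.dist v z = G.dist x z}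

/-!
Write `A` for the adjacency matrix and `S x` for the diagonal matrix with entries `b ^ (-∂(x, v))`,
which is the dual adjacency matrix up to an affine change. On functions of the distance to `x`, `A`
acts as a tridiagonal array with entries quadratic in `b ^ i`, so there `A` and `S x` satisfy an
Askey–Wilson relation and its left-hand side commutes with `A`. The matrix with columns
`b ^ (-∂(x, v)) + c` is, for a suitable `c`, symmetric and proportional to its square; a trace
argument then shows that the commutator vanishes on all functions.

The entries of this identity at a pair at distance `3` are Terwilliger's balanced set conditions.
When `a₁ = 0`, evaluating them from two base points shows that `B(x, y) = B(x, z)` for adjacent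
`y`, `z` in `Γ₃(x)`, and that each `v` in `A(x, y)` is at distance `2` from some `z` in `Γ₃(x)`
adjacent to `y`. Such a `z` lies in `C`, and `v` lies on a geodesic from `x` to `z`.
-/

open Finset Matrix

section Distance

variable {G : SimpleGraph V} {u v w : V} {n : ℕ}

lemma dist_le_dist_add_one_of_adj (hG : G.Connected) (h : G.Adj v w) :
    G.dist u w ≤ G.dist u v + 1 :=
  hG.dist_triangle.trans_eq (by rw [SimpleGraph.dist_eq_one_iff_adj.2 h])

lemma exists_adj_dist_eq (hG : G.Connected) (h : G.dist u v = n + 1) :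
    ∃ w, G.Adj v w ∧ G.dist u w = n := by
  obtain ⟨walk, hwalk⟩ := hG.exists_walk_length_eq_dist v u
  rw [G.dist_comm, h] at hwalk
  cases walk with
  | nil => simp at hwalk
  | @cons _ w _ hvw tail =>
    refine ⟨w, hvw, le_antisymm ?_ ?_⟩
    · rw [SimpleGraph.Walk.length_cons, Nat.add_right_cancel_iff] at hwalk
      exact G.dist_comm.trans_le (hwalk ▸ SimpleGraph.dist_le tail)
    · have := dist_le_dist_add_one_of_adj (u := u) hG hvw.symm
      omega

lemma exists_dist_eq_of_le (hG : G.Connected) (h : n ≤ G.dist u v) : ∃ w, G.dist u w = n := by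
  induction hk : G.dist u v generalizing v with
  | zero => exact ⟨v, by omega⟩
  | succ k ih =>
    obtain rfl | hlt := h.eq_or_lt
    · exact ⟨v, rfl⟩
    · obtain ⟨w, -, hw⟩ := exists_adj_dist_eq hG hk
      exact ih (by omega) hw

variable [Fintype V] [DecidableEq V] [DecidableRel G.Adj]

lemma adjMatrix_pow_apply_eq_zero_of_lt_dist (h : n < G.dist u v) :
    (G.adjMatrix ℝ ^ n) u v = 0 := by
  rw [SimpleGraph.adjMatrix_pow_apply_eq_card_walk, Nat.cast_eq_zero, Fintype.card_eq_zero_iff]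
  exact ⟨fun ⟨walk, hwalk⟩ ↦ (hwalk ▸ h).not_ge (SimpleGraph.dist_le walk)⟩

lemma adjMatrix_pow_dist_apply_ne_zero (hG : G.Connected) (u v : V) :
    (G.adjMatrix ℝ ^ G.dist u v) u v ≠ 0 := by
  rw [SimpleGraph.adjMatrix_pow_apply_eq_card_walk, Nat.cast_ne_zero, ← Nat.pos_iff_ne_zero,
    Fintype.card_pos_iff]
  obtain ⟨walk, hwalk⟩ := hG.exists_walk_length_eq_dist u v
  exact ⟨⟨walk, hwalk⟩⟩

end Distance

section NeighborsAt

variable [Fintype V] (G : SimpleGraph V) [DecidableRel G.Adj]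

/-- `Γ₁(x) ∩ Γ_j(y)` as a finite set; `A(x,y)`, `B(x,y)` and `C(x,y)` are the cases
`j = ∂(x,y)`, `∂(x,y) + 1` and `∂(x,y) - 1`. -/
noncomputable def neighborsAt (x y : V) (j : ℕ) : Finset V :=
  {w ∈ G.neighborFinset x | G.dist y w = j}

variable {G} {x y w : V} {i j : ℕ}

lemma mem_neighborsAt : w ∈ neighborsAt G x y j ↔ G.Adj x w ∧ G.dist y w = j := by
  simp [neighborsAt]

lemma sum_neighborFinset_eq_of_dist_eq_add_one (hG : G.Connected) (h : G.dist y x = i + 1)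
    (f : V → ℝ) :
    ∑ w ∈ G.neighborFinset x, f w = ∑ w ∈ neighborsAt G x y i, f w
      + ∑ w ∈ neighborsAt G x y (i + 1), f w + ∑ w ∈ neighborsAt G x y (i + 2), f w := by
  have hmem : ∀ w ∈ G.neighborFinset x, G.dist y w ∈ Icc i (i + 2) := fun w hw ↦ by
    rw [SimpleGraph.mem_neighborFinset] at hw
    have h₁ := dist_le_dist_add_one_of_adj (u := y) hG hw
    have h₂ := dist_le_dist_add_one_of_adj (u := y) hG hw.symm
    rw [mem_Icc]
    omega
  rw [← sum_fiberwise_of_maps_to hmem, sum_Icc_succ_top (by omega), sum_Icc_succ_top (by omega),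
    Icc_self, sum_singleton]
  rfl

end NeighborsAt

/-- A connected distance-regular graph of diameter at most `D` with intersection numbers `p`. -/
structure IsDRG (G : SimpleGraph V) (D : ℕ) (p : ℕ → ℕ → ℕ → ℕ) : Prop where
  connected : G.Connected
  dist_le : ∀ u v, G.dist u v ≤ D
  distRegular : G.IsDistRegularWith D p

namespace IsDRG

variable [Fintype V] {G : SimpleGraph V} {D : ℕ} {p : ℕ → ℕ → ℕ → ℕ}

lemma card_filter_dist_eq (hG : IsDRG G D p) {i j : ℕ} (hi : i ≤ D) (hj : j ≤ D) (u v : V) :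
    #{w | G.dist u w = i ∧ G.dist v w = j} = p (G.dist u v) i j := by
  rw [← hG.distRegular _ i j (hG.dist_le u v) hi hj u v rfl, Set.ncard_eq_toFinset_card']
  simp

section Degree

variable [DecidableRel G.Adj]

lemma card_neighborsAt (hG : IsDRG G D p) {j : ℕ} (hD : 1 ≤ D) (hj : j ≤ D) (x y : V) :
    #(neighborsAt G x y j) = p (G.dist x y) 1 j := by
  rw [← hG.card_filter_dist_eq hD hj]
  congr 1
  ext w
  simp [mem_neighborsAt]

lemma degree_eq (hG : IsDRG G D p) (hD : 1 ≤ D) (x : V) : G.degree x = p 0 1 1 := by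
  rw [← SimpleGraph.dist_self (G := G) (v := x), ← hG.card_neighborsAt hD hD x x,
    ← SimpleGraph.card_neighborFinset_eq_degree]
  congr 1
  ext w
  simp [mem_neighborsAt]

lemma adjMatrix_mul_ones (hG : IsDRG G D p) (hD : 1 ≤ D) :
    G.adjMatrix ℝ * of (fun _ _ ↦ 1) = (p 0 1 1 : ℝ) • of (fun _ _ ↦ 1) := by
  ext u v
  simp [SimpleGraph.adjMatrix_mul_apply, hG.degree_eq hD]

end Degree

variable [DecidableEq V]

/-- The Bose–Mesner algebra of a distance-regular graph, encoded as the matrices whose entries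
depend only on distance. -/
def boseMesner (hG : IsDRG G D p) : Subalgebra ℝ (Matrix V V ℝ) where
  carrier := {M | ∃ g : ℕ → ℝ, ∀ u v, M u v = g (G.dist u v)}
  add_mem' := by
    rintro M N ⟨g, hg⟩ ⟨h, hh⟩
    exact ⟨g + h, fun u v ↦ by simp [hg, hh]⟩
  algebraMap_mem' c := ⟨fun n ↦ if n = 0 then c else 0, fun u v ↦ by
    simp [algebraMap_matrix_apply, hG.connected.dist_eq_zero_iff]⟩
  mul_mem' := by
    rintro M N ⟨g, hg⟩ ⟨h, hh⟩
    refine ⟨fun n ↦ ∑ ij ∈ range (D + 1) ×ˢ range (D + 1), p n ij.1 ij.2 * (g ij.1 * h ij.2),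
      fun u v ↦ ?_⟩
    have hmem : ∀ w ∈ (univ : Finset V),
        (G.dist u w, G.dist v w) ∈ range (D + 1) ×ˢ range (D + 1) := fun w _ ↦ by
      simp [hG.dist_le]
    rw [mul_apply, ← sum_fiberwise_of_maps_to hmem]
    refine sum_congr rfl fun ij hij ↦ ?_
    simp only [mem_product, mem_range, Nat.lt_succ_iff] at hij
    rw [← hG.card_filter_dist_eq hij.1 hij.2, ← nsmul_eq_mul]
    simp only [Prod.ext_iff]
    refine sum_eq_card_nsmul fun w hw ↦ ?_
    obtain ⟨hu, hv⟩ := (mem_filter.1 hw).2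
    rw [hg, hh, hu, G.dist_comm, hv]

lemma mem_boseMesner (hG : IsDRG G D p) {M : Matrix V V ℝ} :
    M ∈ hG.boseMesner ↔ ∃ g : ℕ → ℝ, ∀ u v, M u v = g (G.dist u v) := Iff.rfl

lemma ones_mem_boseMesner (hG : IsDRG G D p) : of (fun _ _ ↦ 1) ∈ hG.boseMesner :=
  ⟨fun _ ↦ 1, fun _ _ ↦ rfl⟩

variable [DecidableRel G.Adj]

lemma adjMatrix_mem_boseMesner (hG : IsDRG G D p) : G.adjMatrix ℝ ∈ hG.boseMesner :=
  ⟨fun n ↦ if n = 1 then 1 else 0, fun u v ↦ by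
    simp [SimpleGraph.adjMatrix_apply]⟩

/-- The eigenvalue equation recovers the entries at distance `n + 1` from those at smaller
distance. -/
theorem eq_zero_of_adjMatrix_mul_eq_smul (hG : IsDRG G D p) {M : Matrix V V ℝ}
    (hM : M ∈ hG.boseMesner) {θ : ℝ} (hθ : G.adjMatrix ℝ * M = θ • M) {u : V} (hu : M u u = 0) :
    M = 0 := by
  obtain ⟨g, hg⟩ := hG.mem_boseMesner.1 hM
  suffices key : ∀ n a b, G.dist a b = n → M b a = 0 by
    ext b a
    exact key _ a b rfl
  intro n
  induction n using Nat.strong_induction_on with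
  | _ n ih =>
    intro a b hab
    cases n with
    | zero => rwa [hg, G.dist_comm, hab, ← SimpleGraph.dist_self (G := G) (v := u), ← hg]
    | succ n =>
      obtain ⟨w, hbw, haw⟩ := exists_adj_dist_eq hG.connected hab
      have hentry : ∑ x ∈ G.neighborFinset w, M x a = 0 := by
        rw [← SimpleGraph.adjMatrix_mul_apply, hθ, Matrix.smul_apply,
          ih n (by omega) a w haw, smul_zero]
      have hsum : ∑ x ∈ neighborsAt G w a (n + 1), M x a = ∑ x ∈ G.neighborFinset w, M x a := by
        refine sum_filter_of_ne fun x hx hne ↦ ?_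
        have hle := dist_le_dist_add_one_of_adj (u := a) hG.connected
          ((SimpleGraph.mem_neighborFinset _ _ _).1 hx)
        by_contra hax
        exact hne (ih (G.dist a x) (by omega) a x rfl)
      have hconst : ∀ x ∈ neighborsAt G w a (n + 1), M x a = M b a := fun x hx ↦ by
        rw [hg, hg, G.dist_comm, (mem_neighborsAt.1 hx).2, G.dist_comm, hab]
      rw [← hsum, sum_eq_card_nsmul hconst, smul_eq_zero] at hentry
      exact hentry.resolve_left (card_ne_zero_of_mem (mem_neighborsAt.2 ⟨hbw.symm, hab⟩))

lemma diag_smul_eq_diag_smul (hG : IsDRG G D p) {M N : Matrix V V ℝ} (hM : M ∈ hG.boseMesner)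
    (hN : N ∈ hG.boseMesner) {θ : ℝ} (hMθ : G.adjMatrix ℝ * M = θ • M)
    (hNθ : G.adjMatrix ℝ * N = θ • N) (u : V) : M u u • N = N u u • M := by
  refine sub_eq_zero.1 (hG.eq_zero_of_adjMatrix_mul_eq_smul (θ := θ) (u := u)
    (sub_mem (Subalgebra.smul_mem _ hN _) (Subalgebra.smul_mem _ hM _)) ?_ ?_)
  · rw [Matrix.mul_sub, Matrix.mul_smul, Matrix.mul_smul, hMθ, hNθ]
    module
  · simp [mul_comm]

end IsDRG

section TraceNorm

variable {ι κ : Type*} [Fintype V] [Fintype ι] [Fintype κ] {W : Matrix V V ℝ} {t c : ℝ}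

lemma mul_eq_zero_of_trace_transpose_mul_mul_eq_zero (hW : Wᵀ = W) (ht : t ≠ 0)
    (hWW : t • (W * W) = c • W) (F : Matrix V ι ℝ) (hF : (Fᵀ * (W * F)).trace = 0) :
    W * F = 0 := by
  have hscaled : t • ((W * F)ᵀ * (W * F)) = c • (Fᵀ * (W * F)) := by
    rw [transpose_mul, hW, Matrix.mul_assoc, ← Matrix.mul_assoc W, ← Matrix.mul_smul,
      ← Matrix.smul_mul, hWW, Matrix.smul_mul, Matrix.mul_smul]
  have htrace : ((W * F)ᵀ * (W * F)).trace = 0 := by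
    refine (smul_eq_zero.1 ?_).resolve_left ht
    rw [← trace_smul, hscaled, trace_smul, hF, smul_zero]
  exact trace_conjTranspose_mul_self_eq_zero_iff.1 htrace

/-- Reading `(x, (y, z)) ↦ N x y z` as the product `W * F` with
`F w (y, z) = ∑ k, P k y w * Q k w z`, the hypothesis kills `trace (Fᵀ * (W * F))`. -/
theorem eq_zero_of_forall_mulVec_eq_zero [DecidableEq V] (hW : Wᵀ = W) (ht : t ≠ 0)
    (hWW : t • (W * W) = c • W) {P Q : κ → Matrix V V ℝ} {N : V → Matrix V V ℝ}
    (hN : ∀ x, N x = ∑ k, P k * diagonal (W x) * Q k) (hNQ : ∀ x k, N x *ᵥ Q k x = 0) (x : V) :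
    N x = 0 := by
  let F : Matrix V (V × V) ℝ := of fun w yz ↦ ∑ k, P k yz.1 w * Q k w yz.2
  have hWF : ∀ x y z, (W * F) x (y, z) = N x y z := fun x y z ↦ by
    rw [hN, Matrix.sum_apply, Matrix.mul_apply]
    simp only [F, of_apply, mul_sum]
    rw [sum_comm]
    refine sum_congr rfl fun k _ ↦ ?_
    rw [Matrix.mul_apply]
    exact sum_congr rfl fun w _ ↦ by rw [mul_diagonal]; ring
  have htrace : (Fᵀ * (W * F)).trace = 0 := calc
    _ = ∑ w, ∑ y, ∑ z, F w (y, z) * N w y z := by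
      rw [trace_mul_comm]
      refine sum_congr rfl fun w _ ↦ ?_
      rw [diag_apply, Matrix.mul_apply, Fintype.sum_prod_type]
      exact sum_congr rfl fun y _ ↦ sum_congr rfl fun z _ ↦ by
        rw [hWF, transpose_apply, mul_comm]
    _ = ∑ w, ∑ y, ∑ k, P k y w * (N w *ᵥ Q k w) y := by
      refine sum_congr rfl fun w _ ↦ sum_congr rfl fun y _ ↦ ?_
      simp only [F, of_apply, sum_mul, mulVec, dotProduct, mul_sum]
      rw [sum_comm]
      exact sum_congr rfl fun k _ ↦ sum_congr rfl fun z _ ↦ by ring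
    _ = 0 := by simp [hNQ]
  ext y z
  rw [← hWF, mul_eq_zero_of_trace_transpose_mul_mul_eq_zero hW ht hWW F htrace]
  rfl

end TraceNorm

/-- A tridiagonal array on `ℤ` whose entries are quadratic in `q ^ i`; the rate `middle` is fixed
by requiring the row sums to be constant. The leading coefficients `C₂` and `q * C₂` of `lower` and
`upper` are the ones forced by classical parameters. -/
structure QuadraticArray where
  q : ℝ
  B₀ : ℝ
  B₁ : ℝ
  C₀ : ℝ
  C₁ : ℝ
  C₂ : ℝ

namespace QuadraticArray

variable (P : QuadraticArray)

/-- The intersection number `c_i` as a function of `X = q ^ i`. -/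
def lower (X : ℝ) : ℝ := P.C₀ + P.C₁ * X + P.C₂ * X ^ 2

/-- The intersection number `b_i` as a function of `X = q ^ i`. -/
def upper (X : ℝ) : ℝ := P.B₀ + P.B₁ * X + P.q * P.C₂ * X ^ 2

/-- The intersection number `a_i` as a function of `X = q ^ i`, with valency `upper 1`. -/
def middle (X : ℝ) : ℝ := P.upper 1 - P.upper X - P.lower X

/-- The action of the tridiagonal array, that is, of the adjacency matrix on functions of the
distance to a base vertex. -/
noncomputable def step (g : ℤ → ℝ) (i : ℤ) : ℝ :=
  P.lower (P.q ^ i) * g (i - 1) + P.middle (P.q ^ i) * g i + P.upper (P.q ^ i) * g (i + 1)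

/-- Multiplication by `q ^ (-i)`, the radial form of the dual adjacency matrix. -/
noncomputable def invScale (g : ℤ → ℝ) (i : ℤ) : ℝ := (P.q ^ i)⁻¹ * g i

variable {P}

/-- The off-diagonal and the diagonal coefficients of the relation `exists_askeyWilson_step`. -/
lemma exists_askeyWilson_coeff (hq : P.q ≠ 0) :
    ∃ γ ρ ω η : ℝ, ∀ X, X ≠ 0 →
      (P.middle X + P.middle (X * P.q)) * (X⁻¹ + X⁻¹ * P.q⁻¹)
        - (P.q + P.q⁻¹) * (P.middle X * X⁻¹ + P.middle (X * P.q) * (X⁻¹ * P.q⁻¹))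
        - γ * (X⁻¹ + X⁻¹ * P.q⁻¹) - ω = 0 ∧
      2 * X⁻¹ * (P.upper (X * P.q⁻¹) * P.lower X + P.middle X ^ 2
          + P.upper X * P.lower (X * P.q))
        - (P.q + P.q⁻¹) * (P.upper (X * P.q⁻¹) * P.lower X * (X⁻¹ * P.q) + P.middle X ^ 2 * X⁻¹
          + P.upper X * P.lower (X * P.q) * (X⁻¹ * P.q⁻¹))
        - 2 * γ * P.middle X * X⁻¹ - ρ * X⁻¹ - ω * P.middle X - η = 0 := by
  obtain ⟨q, B₀, B₁, C₀, C₁, C₂⟩ := P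
  let m := 2 - q - q⁻¹
  let A₀ := B₁ + q * C₂ - C₀
  let A₁ := -B₁ - C₁
  refine ⟨m * A₀, B₀ * C₀ * (2 - q ^ 2 - q⁻¹ ^ 2) - m * A₀ ^ 2, m * A₁,
    (B₀ * C₁ + B₁ * C₀ * q⁻¹) * (1 - q ^ 2) * (1 - q⁻¹) - m * A₀ * A₁, fun X hX ↦ ?_⟩
  dsimp only at hq
  simp only [middle, upper, lower, m, A₀, A₁]
  constructor
  · field_simp
    ring
  · field_simp
    ring

theorem exists_askeyWilson_step (hq : P.q ≠ 0) :
    ∃ γ ρ ω η : ℝ, ∀ (g : ℤ → ℝ) (i : ℤ),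
      P.step (P.step (P.invScale g)) i
        - (P.q + P.q⁻¹) * P.step (P.invScale (P.step g)) i + P.invScale (P.step (P.step g)) i
        - γ * (P.step (P.invScale g) i + P.invScale (P.step g) i) - ρ * P.invScale g i
        = ω * P.step g i + η * g i := by
  obtain ⟨γ, ρ, ω, η, h⟩ := P.exists_askeyWilson_coeff hq
  refine ⟨γ, ρ, ω, η, fun g i ↦ ?_⟩
  have hX : P.q ^ i ≠ 0 := zpow_ne_zero _ hq
  obtain ⟨hsup, hdiag⟩ := h _ hX
  have hsub := (h _ (mul_ne_zero hX (inv_ne_zero hq))).1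
  have hqq : P.q * P.q⁻¹ = 1 := mul_inv_cancel₀ hq
  rw [inv_mul_cancel_right₀ hq] at hsub
  simp only [mul_inv, inv_inv] at hsub
  rw [mul_inv_cancel_right₀ hq] at hsub
  simp only [step, invScale, add_sub_cancel_right, sub_add_cancel, zpow_add_one₀ hq,
    zpow_sub_one₀ hq, mul_inv, inv_inv]
  generalize P.q ^ i = X at *
  linear_combination P.upper X * g (i + 1) * hsup + P.lower X * g (i - 1) * hsub + g i * hdiag
    - X⁻¹ * (P.upper X * P.upper (X * P.q) * g (i + 1 + 1)
      + P.lower X * P.lower (X * P.q⁻¹) * g (i - 1 - 1)) * hqq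

lemma step_inv_zpow (hq : P.q ≠ 0) (i : ℤ) :
    P.step (fun j ↦ (P.q ^ j)⁻¹) i =
      (P.upper 1 + P.C₀ * (P.q - 1) + P.B₀ * (P.q⁻¹ - 1)) * (P.q ^ i)⁻¹
        + (P.C₁ * (P.q - 1) + P.B₁ * (P.q⁻¹ - 1)) := by
  have hX : P.q ^ i ≠ 0 := zpow_ne_zero _ hq
  simp only [step, zpow_add_one₀ hq, zpow_sub_one₀ hq, middle]
  generalize P.upper 1 = k
  simp only [upper, lower]
  field_simp
  ring

end QuadraticArray

namespace IsDRG

variable [Fintype V] [DecidableEq V] {G : SimpleGraph V} [DecidableRel G.Adj] {D : ℕ}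
  {p : ℕ → ℕ → ℕ → ℕ} {M : Matrix V V ℝ} {θ e : ℝ} {u v : V}

/-- If `θ` were the valency then `e = 0`, and `M` would be proportional to the all-ones matrix. -/
lemma ne_valency_of_adjMatrix_mul_eq (hG : IsDRG G D p) (hM : M ∈ hG.boseMesner)
    (hAM : G.adjMatrix ℝ * M = θ • M + e • of fun _ _ ↦ 1) (hne : M u v ≠ M u u) (hD : 1 ≤ D) :
    θ ≠ p 0 1 1 := by
  rintro rfl
  have hAJ := hG.adjMatrix_mul_ones hD
  have hJA : of (fun _ _ ↦ 1) * G.adjMatrix ℝ = (p 0 1 1 : ℝ) • of (fun _ _ ↦ 1) := by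
    have := congrArg transpose hAJ
    rwa [transpose_mul, SimpleGraph.transpose_adjMatrix, transpose_smul] at this
  have he : e = 0 := by
    have hzero : e • (of (fun _ _ ↦ 1) * of fun _ _ ↦ 1 : Matrix V V ℝ) = 0 := by
      have := congrArg (of (fun _ _ ↦ 1) * ·) hAM
      simpa only [← Matrix.mul_assoc, hJA, Matrix.smul_mul, Matrix.mul_add, Matrix.mul_smul,
        left_eq_add] using this
    have : Nonempty V := ⟨u⟩
    simpa [Matrix.mul_apply] using congrFun (congrFun hzero u) u
  rw [he, zero_smul, add_zero] at hAM
  have := congrFun (congrFun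
    (hG.diag_smul_eq_diag_smul hM hG.ones_mem_boseMesner hAM hAJ u) u) v
  exact hne (by simpa using this.symm)

/-- Shifting `M` by a multiple of the all-ones matrix yields a nonzero eigenmatrix `W`; the square
of `W` has the same eigenvalue, so it is proportional to `W`. -/
theorem exists_shift_mul_self (hG : IsDRG G D p) (hM : M ∈ hG.boseMesner)
    (hAM : G.adjMatrix ℝ * M = θ • M + e • of fun _ _ ↦ 1) (hne : M u v ≠ M u u) :
    ∃ c t κ : ℝ, t ≠ 0 ∧ t • ((M + c • of fun _ _ ↦ 1) * (M + c • of fun _ _ ↦ 1))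
      = κ • (M + c • of fun _ _ ↦ 1) := by
  have hD : 1 ≤ D := by
    refine le_trans ?_ (hG.dist_le u v)
    exact hG.connected.pos_dist_of_ne fun huv ↦ hne (huv ▸ rfl)
  have hθ : θ - p 0 1 1 ≠ 0 := sub_ne_zero.2 (hG.ne_valency_of_adjMatrix_mul_eq hM hAM hne hD)
  set c : ℝ := e / (θ - p 0 1 1)
  set W : Matrix V V ℝ := M + c • of fun _ _ ↦ 1 with hW
  have hWmem : W ∈ hG.boseMesner :=
    add_mem hM (Subalgebra.smul_mem _ hG.ones_mem_boseMesner _)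
  have hAW : G.adjMatrix ℝ * W = θ • W := by
    have he : e = c * (θ - p 0 1 1) := (div_mul_cancel₀ _ hθ).symm
    rw [hW, Matrix.mul_add, Matrix.mul_smul, hAM, hG.adjMatrix_mul_ones hD, he]
    module
  refine ⟨c, W u u, (W * W) u u, fun hWu ↦ hne ?_, ?_⟩
  · have hzero := hG.eq_zero_of_adjMatrix_mul_eq_smul hWmem hAW hWu
    have hv := congrFun (congrFun hzero u) v
    have hu := congrFun (congrFun hzero u) u
    simp only [hW, Matrix.add_apply, Matrix.smul_apply, of_apply, Matrix.zero_apply] at hu hv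
    linarith
  · refine hG.diag_smul_eq_diag_smul hWmem (mul_mem hWmem hWmem) hAW ?_ u
    rw [← Matrix.mul_assoc, hAW, Matrix.smul_mul]

end IsDRG

section AskeyWilson

variable {R : Type*} [Ring R] [Algebra ℝ R]

/-- The left-hand side of the Askey–Wilson relation for the pair `A`, `S`; the tridiagonal relation
says that it commutes with `A`. -/
def askeyWilson (A S : R) (β γ ρ : ℝ) : R :=
  A ^ 2 * S - β • (A * S * A) + S * A ^ 2 - γ • (A * S + S * A) - ρ • S

variable (A S : R) (c β γ ρ : ℝ)

lemma lie_askeyWilson : ⁅A, askeyWilson A S β γ ρ⁆ = A ^ 3 * S - S * A ^ 3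
    - (β + 1) • (A ^ 2 * S * A - A * S * A ^ 2) - γ • (A ^ 2 * S - S * A ^ 2)
    - ρ • (A * S - S * A) := by
  simp only [Ring.lie_def, askeyWilson, pow_succ, pow_zero, one_mul, mul_add, mul_sub, add_mul,
    sub_mul, Algebra.mul_smul_comm, Algebra.smul_mul_assoc, mul_assoc]
  module

lemma lie_sq_askeyWilson : ⁅A ^ 2, askeyWilson A S β γ ρ⁆ = A ^ 4 * S - S * A ^ 4
    - β • (A ^ 3 * S * A - A * S * A ^ 3)
    - γ • (A ^ 3 * S - S * A ^ 3 + (A ^ 2 * S * A - A * S * A ^ 2))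
    - ρ • (A ^ 2 * S - S * A ^ 2) := by
  simp only [Ring.lie_def, askeyWilson, pow_succ, pow_zero, one_mul, mul_add, mul_sub, add_mul,
    sub_mul, Algebra.mul_smul_comm, Algebra.smul_mul_assoc, mul_assoc]
  module

lemma lie_askeyWilson_add_smul_one :
    ⁅A, askeyWilson A (S + c • 1) β γ ρ⁆ = ⁅A, askeyWilson A S β γ ρ⁆ := by
  simp only [lie_askeyWilson, mul_add, add_mul, mul_smul_comm, smul_mul_assoc, mul_one, one_mul,
    ← pow_succ, ← pow_succ']
  module

lemma exists_lie_askeyWilson_eq_sum :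
    ∃ (P : Fin 8 → R) (e : Fin 8 → ℕ), ∀ S,
      ⁅A, askeyWilson A S β γ ρ⁆ = ∑ k, P k * S * A ^ e k := by
  refine ⟨![A ^ 3, -1, (-(β + 1)) • A ^ 2, (β + 1) • A, (-γ) • A ^ 2, γ • 1, (-ρ) • A, ρ • 1],
    ![0, 3, 1, 2, 0, 2, 0, 1], fun S ↦ ?_⟩
  rw [lie_askeyWilson, Fin.sum_univ_eight]
  simp only [Matrix.cons_val, pow_zero, pow_one, mul_one, smul_mul_assoc, one_mul, neg_mul]
  module

end AskeyWilson

/-- The function of the distance to `x` with profile `g`. -/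
noncomputable def radial (G : SimpleGraph V) (g : ℤ → ℝ) (x v : V) : ℝ := g (G.dist x v)

lemma IsDRG.exists_eq_radial [Fintype V] [DecidableEq V] {G : SimpleGraph V} {D : ℕ}
    {p : ℕ → ℕ → ℕ → ℕ} (hG : IsDRG G D p) {M : Matrix V V ℝ} (hM : M ∈ hG.boseMesner) :
    ∃ g : ℤ → ℝ, ∀ x, M x = radial G g x := by
  obtain ⟨g, hg⟩ := hM
  exact ⟨fun i ↦ g i.toNat, fun x ↦ funext fun v ↦ by simp [radial, hg]⟩

namespace QuadraticArray

/-- The dual adjacency matrix of `G` with respect to `x`, up to an affine change of the dual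
eigenvalues. -/
noncomputable def dualAdj [DecidableEq V] (P : QuadraticArray) (G : SimpleGraph V) (x : V) :
    Matrix V V ℝ := diagonal (radial G (fun i ↦ (P.q ^ i)⁻¹) x)

variable [Fintype V]

lemma dualAdj_mulVec_radial [DecidableEq V] (P : QuadraticArray) (G : SimpleGraph V) (g : ℤ → ℝ)
    (x : V) : P.dualAdj G x *ᵥ radial G g x = radial G (P.invScale g) x := by
  ext v
  rw [dualAdj, mulVec_diagonal]
  rfl

variable (P : QuadraticArray) (G : SimpleGraph V) [DecidableRel G.Adj]

/-- The adjacency matrix of `G` acts on the functions of the distance to any base vertex as the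
tridiagonal array `P`. -/
def Realizes : Prop :=
  ∀ (g : ℤ → ℝ) (x v : V), ∑ w ∈ G.neighborFinset v, radial G g x w = radial G (P.step g) x v

variable {P G}

lemma Realizes.adjMatrix_mulVec_radial (h : P.Realizes G) (g : ℤ → ℝ) (x : V) :
    G.adjMatrix ℝ *ᵥ radial G g x = radial G (P.step g) x := by
  ext v
  rw [SimpleGraph.adjMatrix_mulVec_apply, h]

variable {D : ℕ} {p : ℕ → ℕ → ℕ → ℕ}

lemma Realizes.exists_shift_mul_self (h : P.Realizes G) (hG : IsDRG G D p) (hq : P.q ≠ 0)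
    (hq' : P.q ≠ 1) {u v : V} (huv : G.Adj u v) :
    ∃ c t κ : ℝ, t ≠ 0 ∧
      t • (of (radial G fun i ↦ (P.q ^ i)⁻¹ + c) * of (radial G fun i ↦ (P.q ^ i)⁻¹ + c))
        = κ • of (radial G fun i ↦ (P.q ^ i)⁻¹ + c) := by
  classical
  have hmem : of (radial G fun i ↦ (P.q ^ i)⁻¹) ∈ hG.boseMesner :=
    ⟨fun n ↦ (P.q ^ (n : ℤ))⁻¹, fun _ _ ↦ rfl⟩
  have hshift : ∀ c : ℝ, of (radial G fun i ↦ (P.q ^ i)⁻¹ + c)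
      = of (radial G fun i ↦ (P.q ^ i)⁻¹) + c • of fun _ _ ↦ 1 := fun c ↦ by
    ext x z
    simp [radial]
  simp only [hshift]
  refine hG.exists_shift_mul_self (u := u) (v := v) hmem
    (θ := P.upper 1 + P.C₀ * (P.q - 1) + P.B₀ * (P.q⁻¹ - 1))
    (e := P.C₁ * (P.q - 1) + P.B₁ * (P.q⁻¹ - 1)) ?_ ?_
  · ext x z
    have hsum := h (fun i ↦ (P.q ^ i)⁻¹) z x
    rw [radial, step_inv_zpow hq] at hsum
    rw [SimpleGraph.adjMatrix_mul_apply]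
    simpa [radial, G.dist_comm] using hsum
  · simpa [radial, SimpleGraph.dist_eq_one_iff_adj.2 huv] using hq'

variable [DecidableEq V]

lemma Realizes.exists_askeyWilson_mulVec_radial (h : P.Realizes G) (hq : P.q ≠ 0) :
    ∃ γ ρ ω η : ℝ, ∀ (g : ℤ → ℝ) (x : V),
      askeyWilson (G.adjMatrix ℝ) (P.dualAdj G x) (P.q + P.q⁻¹) γ ρ
        *ᵥ radial G g x = ω • radial G (P.step g) x + η • radial G g x := by
  obtain ⟨γ, ρ, ω, η, hstep⟩ := exists_askeyWilson_step hq
  refine ⟨γ, ρ, ω, η, fun g x ↦ ?_⟩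
  simp only [askeyWilson, pow_two, sub_mulVec, add_mulVec, smul_mulVec, ← mulVec_mulVec,
    h.adjMatrix_mulVec_radial, dualAdj_mulVec_radial]
  ext v
  exact hstep g (G.dist x v)

lemma Realizes.exists_lie_mulVec_radial_eq_zero (h : P.Realizes G) (hq : P.q ≠ 0) :
    ∃ γ ρ : ℝ, ∀ (g : ℤ → ℝ) (x : V),
      ⁅G.adjMatrix ℝ, askeyWilson (G.adjMatrix ℝ) (P.dualAdj G x) (P.q + P.q⁻¹) γ ρ⁆
        *ᵥ radial G g x = 0 := by
  obtain ⟨γ, ρ, ω, η, hradial⟩ := h.exists_askeyWilson_mulVec_radial hq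
  refine ⟨γ, ρ, fun g x ↦ ?_⟩
  rw [Ring.lie_def, sub_mulVec, ← mulVec_mulVec, ← mulVec_mulVec, h.adjMatrix_mulVec_radial,
    hradial, hradial, mulVec_add, mulVec_smul, mulVec_smul, h.adjMatrix_mulVec_radial,
    h.adjMatrix_mulVec_radial, sub_self]

/-- The columns at `x` of the powers of `A` are radial, so the commutator of `A` and the
Askey–Wilson expression about `x` kills them; the trace argument then makes it vanish. -/
theorem Realizes.exists_commute_askeyWilson (h : P.Realizes G) (hG : IsDRG G D p) (hq : P.q ≠ 0)
    (hq' : P.q ≠ 1) {u v : V} (huv : G.Adj u v) :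
    ∃ γ ρ : ℝ, ∀ x, Commute (G.adjMatrix ℝ)
      (askeyWilson (G.adjMatrix ℝ) (P.dualAdj G x) (P.q + P.q⁻¹) γ ρ) := by
  obtain ⟨γ, ρ, hradial⟩ := h.exists_lie_mulVec_radial_eq_zero hq
  obtain ⟨c, t, κ, ht, hW⟩ := h.exists_shift_mul_self hG hq hq' huv
  have hshift : ∀ x, diagonal (radial G (fun i ↦ (P.q ^ i)⁻¹ + c) x)
      = P.dualAdj G x + c • 1 := fun x ↦ by
    unfold dualAdj
    rw [smul_one_eq_diagonal, diagonal_add]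
    rfl
  obtain ⟨Q, e, hsum⟩ := exists_lie_askeyWilson_eq_sum (G.adjMatrix ℝ) (P.q + P.q⁻¹) γ ρ
  have hsymm : (of (radial G fun i ↦ (P.q ^ i)⁻¹ + c))ᵀ
      = of (radial G fun i ↦ (P.q ^ i)⁻¹ + c) := by
    ext x z
    simp [radial, G.dist_comm]
  have hN : ∀ x, ⁅G.adjMatrix ℝ,
        askeyWilson (G.adjMatrix ℝ) (P.dualAdj G x) (P.q + P.q⁻¹) γ ρ⁆
      = ∑ k, Q k * diagonal (radial G (fun i ↦ (P.q ^ i)⁻¹ + c) x) * G.adjMatrix ℝ ^ e k :=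
    fun x ↦ by rw [← hsum, hshift, lie_askeyWilson_add_smul_one]
  refine ⟨γ, ρ, fun x ↦
    commute_iff_lie_eq.2 (eq_zero_of_forall_mulVec_eq_zero hsymm ht hW hN (fun x k ↦ ?_) x)⟩
  obtain ⟨g, hg⟩ := hG.exists_eq_radial (pow_mem hG.adjMatrix_mem_boseMesner (e k))
  rw [hg, hradial]

end QuadraticArray

section Entries

variable [Fintype V] [DecidableEq V] {G : SimpleGraph V} [DecidableRel G.Adj] {y z : V} {i n : ℕ}
  {g : ℕ → ℝ}

lemma adjMatrix_pow_mul_diagonal_mul_adjMatrix_apply (hG : G.Connected)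
    (hg : ∀ u v, (G.adjMatrix ℝ ^ n) u v = g (G.dist u v)) (hyz : G.dist y z = i + 1)
    (hn : n ≤ i + 1) (f : V → ℝ) :
    (G.adjMatrix ℝ ^ n * diagonal f * G.adjMatrix ℝ) y z =
      g i * ∑ w ∈ neighborsAt G z y i, f w + g (i + 1) * ∑ w ∈ neighborsAt G z y (i + 1), f w := by
  rw [SimpleGraph.mul_adjMatrix_apply, sum_neighborFinset_eq_of_dist_eq_add_one hG hyz]
  simp only [mul_diagonal, mul_sum]
  have hconst : ∀ j, ∑ w ∈ neighborsAt G z y j, (G.adjMatrix ℝ ^ n) y w * f w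
      = ∑ w ∈ neighborsAt G z y j, g j * f w := fun j ↦
    sum_congr rfl fun w hw ↦ by rw [hg, (mem_neighborsAt.1 hw).2]
  have hfar : ∑ w ∈ neighborsAt G z y (i + 2), (G.adjMatrix ℝ ^ n) y w * f w = 0 :=
    sum_eq_zero fun w hw ↦ by
      rw [adjMatrix_pow_apply_eq_zero_of_lt_dist (by rw [(mem_neighborsAt.1 hw).2]; omega),
        zero_mul]
  rw [hfar, add_zero, hconst, hconst]

lemma adjMatrix_mul_diagonal_mul_adjMatrix_pow_apply (hG : G.Connected)
    (hg : ∀ u v, (G.adjMatrix ℝ ^ n) u v = g (G.dist u v)) (hyz : G.dist y z = i + 1)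
    (hn : n ≤ i + 1) (f : V → ℝ) :
    (G.adjMatrix ℝ * diagonal f * G.adjMatrix ℝ ^ n) y z =
      g i * ∑ w ∈ neighborsAt G y z i, f w + g (i + 1) * ∑ w ∈ neighborsAt G y z (i + 1), f w := by
  rw [← adjMatrix_pow_mul_diagonal_mul_adjMatrix_apply hG hg (G.dist_comm.trans hyz) hn,
    ← transpose_apply (_ * _)]
  simp only [transpose_mul, transpose_pow, SimpleGraph.transpose_adjMatrix, diagonal_transpose,
    Matrix.mul_assoc]

end Entries

namespace IsDRG

variable [Fintype V] [DecidableEq V] {G : SimpleGraph V} [DecidableRel G.Adj] {D : ℕ}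
  {p : ℕ → ℕ → ℕ → ℕ} {y z : V}

lemma exists_adjMatrix_pow_apply_eq (hG : IsDRG G D p) (y z : V) :
    ∃ r : ℕ → ℕ → ℝ, (∀ n u v, (G.adjMatrix ℝ ^ n) u v = r n (G.dist u v)) ∧
      ∀ m ≤ G.dist y z, r m m ≠ 0 ∧ ∀ n < m, r n m = 0 := by
  choose r hr using fun n ↦ pow_mem hG.adjMatrix_mem_boseMesner n
  refine ⟨r, hr, fun m hm ↦ ?_⟩
  obtain ⟨w, rfl⟩ := exists_dist_eq_of_le hG.connected hm
  simp only [← hr]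
  exact ⟨adjMatrix_pow_dist_apply_ne_zero hG.connected y w,
    fun n hn ↦ adjMatrix_pow_apply_eq_zero_of_lt_dist hn⟩

/-- Terwilliger's balanced set condition at distance `3`, read off the `(y, z)` entries of the
tridiagonal relation and of its analogue for `A ^ 2`. -/
theorem exists_balanced (hG : IsDRG G D p) (hyz : G.dist y z = 3) {β : ℝ} (hβ : β ≠ 0)
    (hβ' : β + 1 ≠ 0) (γ ρ : ℝ) :
    ∃ K₂ K₃ : ℝ, ∀ f : V → ℝ,
      Commute (G.adjMatrix ℝ) (askeyWilson (G.adjMatrix ℝ) (diagonal f) β γ ρ) →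
      ∑ w ∈ neighborsAt G z y 2, f w - ∑ w ∈ neighborsAt G y z 2, f w = K₂ * (f z - f y) ∧
      ∑ w ∈ neighborsAt G z y 3, f w - ∑ w ∈ neighborsAt G y z 3, f w = K₃ * (f z - f y) := by
  obtain ⟨r, hr, hr_dist⟩ := hG.exists_adjMatrix_pow_apply_eq y z
  rw [hyz] at hr_dist
  obtain ⟨hr₃₃, hr_lt⟩ := hr_dist 3 le_rfl
  have hr₂₂ : r 2 2 ≠ 0 := (hr_dist 2 (by norm_num)).1
  have hr₂₃ : r 2 3 = 0 := hr_lt 2 (by norm_num)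
  have hadj : G.adjMatrix ℝ y z = 0 := by
    rw [← pow_one (G.adjMatrix ℝ), hr, hyz, hr_lt 1 (by norm_num)]
  set K₂ : ℝ := r 3 3 / ((β + 1) * r 2 2) with hK₂
  refine ⟨K₂, (r 4 3 - β * r 3 2 * K₂ - γ * (r 3 3 + r 2 2 * K₂)) / (β * r 3 3), fun f hcomm ↦ ?_⟩
  have hleft := fun n hn ↦ adjMatrix_pow_mul_diagonal_mul_adjMatrix_apply (n := n) hG.connected
    (hr n) hyz hn f
  have hright := fun n hn ↦ adjMatrix_mul_diagonal_mul_adjMatrix_pow_apply (n := n) hG.connected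
    (hr n) hyz hn f
  have hlie := congrArg (· y z) (commute_iff_lie_eq.1 hcomm)
  have hlie_sq := congrArg (· y z) (commute_iff_lie_eq.1 (hcomm.pow_left 2))
  simp only [lie_askeyWilson, Matrix.sub_apply, Matrix.smul_apply, Matrix.zero_apply, mul_diagonal,
    diagonal_mul, smul_eq_mul, hleft 2 (by norm_num), hright 2 (by norm_num), hr, hyz, hr₂₃,
    hadj] at hlie
  simp only [lie_sq_askeyWilson, Matrix.sub_apply, Matrix.add_apply, Matrix.smul_apply,
    Matrix.zero_apply, mul_diagonal, diagonal_mul, smul_eq_mul, hleft 2 (by norm_num),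
    hright 2 (by norm_num), hleft 3 le_rfl, hright 3 le_rfl, hr, hyz, hr₂₃] at hlie_sq
  have hbal : ∑ w ∈ neighborsAt G z y 2, f w - ∑ w ∈ neighborsAt G y z 2, f w
      = K₂ * (f z - f y) := by
    rw [hK₂, div_mul_eq_mul_div, eq_div_iff (mul_ne_zero hβ' hr₂₂)]
    linear_combination -hlie
  refine ⟨hbal, ?_⟩
  rw [div_mul_eq_mul_div, eq_div_iff (mul_ne_zero hβ hr₃₃)]
  linear_combination -hlie_sq - (β * r 3 2 + γ * r 2 2) * hbal

end IsDRG

section IntersectionNumbers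

variable {G : SimpleGraph V} {D : ℕ} {p : ℕ → ℕ → ℕ → ℕ} {x y : V} {i : ℕ}

lemma IsDRG.card_neighborsAt_add_eq [Fintype V] [DecidableRel G.Adj] (hG : IsDRG G D p)
    (hxy : G.dist y x = i + 1) :
    #(neighborsAt G x y i) + #(neighborsAt G x y (i + 1)) + #(neighborsAt G x y (i + 2))
      = p 0 1 1 := by
  have hsum := sum_neighborFinset_eq_of_dist_eq_add_one hG.connected hxy fun _ ↦ 1
  have hD : i + 1 ≤ D := hxy ▸ hG.dist_le y x
  simp only [sum_const, nsmul_eq_mul, mul_one, SimpleGraph.card_neighborFinset_eq_degree,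
    hG.degree_eq (D := D) (by omega)] at hsum
  exact_mod_cast hsum.symm

lemma IsDRG.intersection_sum [Finite V] (hG : IsDRG G D p) (hxy : G.dist x y = i + 1)
    (hi : i + 2 ≤ D) :
    p (i + 1) 1 i + p (i + 1) 1 (i + 1) + p (i + 1) 1 (i + 2) = p 0 1 1 := by
  classical
  have := Fintype.ofFinite V
  rw [← hG.card_neighborsAt_add_eq (G.dist_comm.trans hxy),
    hG.card_neighborsAt (by omega) (by omega), hG.card_neighborsAt (by omega) (by omega),
    hG.card_neighborsAt (by omega) hi, hxy]

lemma IsDRG.intersection_lower_ne_zero [Finite V] (hG : IsDRG G D p) (hxy : G.dist x y = i + 1) :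
    p (i + 1) 1 i ≠ 0 := by
  classical
  have := Fintype.ofFinite V
  have hD : i + 1 ≤ D := hxy ▸ hG.dist_le x y
  obtain ⟨w, hyw, hxw⟩ := exists_adj_dist_eq hG.connected hxy
  rw [← hxy, G.dist_comm, ← hG.card_neighborsAt (by omega) (by omega) y x]
  exact card_ne_zero_of_mem (mem_neighborsAt.2 ⟨hyw, hxw⟩)

end IntersectionNumbers

/-- For `b = 1` the condition `a₁ = 0` gives `a₂ = -4α`, so `-1/3 ≤ α ≤ -1/4` and `c₂ = 2(1 + α)`
would lie strictly between `1` and `2`. -/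
lemma HasClassicalParams.ne_one [Finite V] {G : SimpleGraph V} {D : ℕ} {p : ℕ → ℕ → ℕ → ℕ}
    {b α β : ℝ} (hcp : HasClassicalParams D p b α β) (hG : IsDRG G D p) (ha1 : p 1 1 1 = 0)
    (ha2 : p 2 1 2 ≠ 0) {x y : V} (hxy : G.dist x y = 3) : b ≠ 1 := by
  rintro rfl
  obtain ⟨-, -, hc, hb⟩ := hcp
  have hD : 3 ≤ D := hxy ▸ hG.dist_le x y
  obtain ⟨v₁, hv₁⟩ := exists_dist_eq_of_le (u := x) (v := y) (n := 1) hG.connected (by omega)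
  obtain ⟨v₂, hv₂⟩ := exists_dist_eq_of_le (u := x) (v := y) (n := 2) hG.connected (by omega)
  have hsum₁ : (p 1 1 0 + p 1 1 1 + p 1 1 2 : ℝ) = p 0 1 1 :=
    mod_cast hG.intersection_sum (i := 0) hv₁ (by omega)
  have hsum₂ : (p 2 1 1 + p 2 1 2 + p 2 1 3 : ℝ) = p 0 1 1 :=
    mod_cast hG.intersection_sum (i := 1) hv₂ (by omega)
  have ha₂_pos : (1 : ℝ) ≤ p 2 1 2 := mod_cast Nat.one_le_iff_ne_zero.2 ha2
  have hc₃_pos : (1 : ℝ) ≤ p 3 1 2 :=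
    mod_cast Nat.one_le_iff_ne_zero.2 (hG.intersection_lower_ne_zero hxy)
  have hbracket : ∀ i, gaussBracket 1 i = i := fun i ↦ by simp [gaussBracket]
  have hc₁ : (p 1 1 0 : ℝ) = 1 := by simpa [hbracket] using hc 1 (by omega)
  have hc₂ : (p 2 1 1 : ℝ) = 2 * (1 + α) := by simpa [hbracket] using hc 2 (by omega)
  have hc₃ : (p 3 1 2 : ℝ) = 3 * (1 + α * 2) := by simpa [hbracket] using hc 3 hD
  have hk : (p 0 1 1 : ℝ) = D * β := by simpa [hbracket] using hb 0 (by omega)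
  have hb₁ : (p 1 1 2 : ℝ) = (D - 1) * (β - α) := by simpa [hbracket] using hb 1 (by omega)
  have hb₂ : (p 2 1 3 : ℝ) = (D - 2) * (β - α * 2) := by simpa [hbracket] using hb 2 (by omega)
  have ha₂ : (p 2 1 2 : ℝ) = -4 * α := by
    rw [ha1, Nat.cast_zero, hc₁, hk, hb₁] at hsum₁
    rw [hc₂, hk, hb₂] at hsum₂
    linear_combination hsum₂ - 2 * hsum₁
  have hlt : (1 : ℝ) < p 2 1 1 ∧ (p 2 1 1 : ℝ) < 2 := by
    constructor <;> linarith
  have : 1 < p 2 1 1 ∧ p 2 1 1 < 2 := mod_cast hlt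
  omega

namespace QuadraticArray

variable [Fintype V] {P : QuadraticArray} {G : SimpleGraph V} [DecidableRel G.Adj] {D : ℕ}
  {p : ℕ → ℕ → ℕ → ℕ}

lemma sum_neighborsAt_radial (G : SimpleGraph V) [DecidableRel G.Adj] (g : ℤ → ℝ) (x v : V)
    (j : ℕ) : ∑ w ∈ neighborsAt G v x j, radial G g x w = #(neighborsAt G v x j) * g j := by
  rw [← nsmul_eq_mul]
  exact sum_eq_card_nsmul fun w hw ↦ by rw [radial, (mem_neighborsAt.1 hw).2]

lemma card_neighborsAt_succ_eq_upper (hG : IsDRG G D p) (hD : 1 ≤ D)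
    (hupper : P.upper (P.q ^ D) = 0) (hb : ∀ i < D, (p i 1 (i + 1) : ℝ) = P.upper (P.q ^ i))
    {x v : V} {i : ℕ} (hxv : G.dist x v = i) :
    (#(neighborsAt G v x (i + 1)) : ℝ) = P.upper (P.q ^ i) := by
  obtain hi | rfl := (hxv ▸ hG.dist_le x v : i ≤ D).lt_or_eq
  · rw [hG.card_neighborsAt hD hi, G.dist_comm, hxv, hb i hi]
  · rw [hupper, Nat.cast_eq_zero, card_eq_zero, eq_empty_iff_forall_notMem]
    intro w hw
    have := hG.dist_le x w
    have := (mem_neighborsAt.1 hw).2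
    omega

theorem realizes_of_intersectionNumbers (hG : IsDRG G D p) (hD : 1 ≤ D)
    (hlower : P.lower 1 = 0) (hupper : P.upper (P.q ^ D) = 0)
    (hc : ∀ i < D, (p (i + 1) 1 i : ℝ) = P.lower (P.q ^ (i + 1)))
    (hb : ∀ i < D, (p i 1 (i + 1) : ℝ) = P.upper (P.q ^ i)) : P.Realizes G := by
  intro g x v
  have hk : (p 0 1 1 : ℝ) = P.upper 1 := by simpa using hb 0 hD
  cases hxv : G.dist x v with
  | zero =>
    obtain rfl := hG.connected.dist_eq_zero_iff.1 hxv
    have hsphere : ∀ w ∈ G.neighborFinset x, radial G g x w = g 1 := fun w hw ↦ by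
      rw [radial, SimpleGraph.dist_eq_one_iff_adj.2 (by simpa using hw), Nat.cast_one]
    rw [sum_eq_card_nsmul hsphere, SimpleGraph.card_neighborFinset_eq_degree, hG.degree_eq hD]
    simp [radial, step, middle, hlower, hk]
  | succ i =>
    have hi : i < D := (hxv ▸ hG.dist_le x v : i + 1 ≤ D)
    have hcard_lower : (#(neighborsAt G v x i) : ℝ) = P.lower (P.q ^ (i + 1)) := by
      rw [hG.card_neighborsAt hD hi.le, G.dist_comm, hxv, hc i hi]
    have hcard_upper := card_neighborsAt_succ_eq_upper hG hD hupper hb hxv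
    have hcard_middle : (#(neighborsAt G v x (i + 1)) : ℝ) = P.middle (P.q ^ (i + 1)) := by
      rw [middle, ← hk, ← hcard_upper, ← hcard_lower, ← hG.card_neighborsAt_add_eq hxv]
      push_cast
      ring
    rw [sum_neighborFinset_eq_of_dist_eq_add_one hG.connected hxv]
    simp only [sum_neighborsAt_radial, hcard_lower, hcard_middle, hcard_upper]
    simp only [radial, step, hxv, zpow_natCast]
    push_cast
    rw [add_sub_cancel_right, add_assoc (i : ℤ) 1 1, one_add_one_eq_two]

end QuadraticArray

lemma gaussBracket_eq {b : ℝ} (hb : b ≠ 1) (i : ℕ) : gaussBracket b i = (b ^ i - 1) / (b - 1) :=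
  geom_sum_eq hb i

/-- The array of the intersection numbers for classical parameters `(D, b, α, β)`, obtained by
substituting `[i] = (X - 1) / (b - 1)` with `X = b ^ i`. -/
noncomputable def classicalArray (D : ℕ) (b α β : ℝ) : QuadraticArray where
  q := b
  B₀ := (gaussBracket b D + (b - 1)⁻¹) * (β + α * (b - 1)⁻¹)
  B₁ := -(b - 1)⁻¹ * (β + α * (b - 1)⁻¹) - (gaussBracket b D + (b - 1)⁻¹) * (α * (b - 1)⁻¹)
  C₀ := -(b - 1)⁻¹ * (1 - α * (b - 1)⁻¹)
  C₁ := (b - 1)⁻¹ * (1 - α * (b - 1)⁻¹ - α * (b - 1)⁻¹ / b)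
  C₂ := α * (b - 1)⁻¹ ^ 2 / b

section ClassicalArray

variable {D : ℕ} {p : ℕ → ℕ → ℕ → ℕ} {b α β : ℝ}

lemma lower_classicalArray_pow_succ (hb : b ≠ 0) (hb' : b ≠ 1) (i : ℕ) :
    (classicalArray D b α β).lower (b ^ (i + 1))
      = gaussBracket b (i + 1) * (1 + α * gaussBracket b i) := by
  simp only [classicalArray, QuadraticArray.lower, gaussBracket_eq hb', pow_succ]
  field_simp
  ring

lemma lower_classicalArray_one (hb : b ≠ 0) (hb' : b ≠ 1) :
    (classicalArray D b α β).lower 1 = 0 := by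
  have := sub_ne_zero.2 hb'
  simp only [classicalArray, QuadraticArray.lower]
  field_simp
  ring

lemma upper_classicalArray_pow (hb : b ≠ 0) (hb' : b ≠ 1) (i : ℕ) :
    (classicalArray D b α β).upper (b ^ i)
      = (gaussBracket b D - gaussBracket b i) * (β - α * gaussBracket b i) := by
  simp only [classicalArray, QuadraticArray.upper, gaussBracket_eq hb' i]
  field_simp
  ring

theorem HasClassicalParams.realizes [Fintype V] {G : SimpleGraph V} [DecidableRel G.Adj]
    (hcp : HasClassicalParams D p b α β) (hb' : b ≠ 1) (hG : IsDRG G D p) (hD : 1 ≤ D) :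
    (classicalArray D b α β).Realizes G := by
  obtain ⟨hb, -, hlower, hupper⟩ := hcp
  refine QuadraticArray.realizes_of_intersectionNumbers hG hD (lower_classicalArray_one hb hb')
    ((upper_classicalArray_pow hb hb' D).trans (by rw [sub_self, zero_mul])) (fun i hi ↦ ?_)
    fun i hi ↦ (hupper i hi.le).trans (upper_classicalArray_pow hb hb' i).symm
  exact (hlower (i + 1) hi).trans (lower_classicalArray_pow_succ hb hb' i).symm

end ClassicalArray

lemma IsDRG.dist_eq_two_of_adj_of_adj [Finite V] {G : SimpleGraph V} {D : ℕ} {p : ℕ → ℕ → ℕ → ℕ}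
    {u v w : V} (hG : IsDRG G D p) (ha1 : p 1 1 1 = 0) (huv : G.Adj u v) (huw : G.Adj u w)
    (hvw : v ≠ w) : G.dist v w = 2 := by
  classical
  have := Fintype.ofFinite V
  have hle := dist_le_dist_add_one_of_adj (u := v) hG.connected huw
  have hvu : G.dist v u = 1 := SimpleGraph.dist_eq_one_iff_adj.2 huv.symm
  have hD : 1 ≤ D := hvu ▸ hG.dist_le v u
  have hzero : G.dist v w ≠ 0 := mt hG.connected.dist_eq_zero_iff.1 hvw
  have hcard := hG.card_neighborsAt hD hD u v
  rw [G.dist_comm, hvu, ha1, card_eq_zero, eq_empty_iff_forall_notMem] at hcard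
  have hone : G.dist v w ≠ 1 := fun h ↦ hcard w (mem_neighborsAt.2 ⟨huw, h⟩)
  omega

section Balanced

variable [Fintype V] {G : SimpleGraph V} [DecidableRel G.Adj] {D : ℕ} {p : ℕ → ℕ → ℕ → ℕ}
  {b : ℝ} {u v x y : V}

variable (G b) in
/-- The balanced set condition at distance `3` for the dual eigenvalues `b ^ (-i)`: the differences
of the sums over `C(z, y)` and `C(y, z)`, and over `A(z, y)` and `A(y, z)`, are proportional to the
difference of the values at `z` and `y`. -/
def IsBalanced : Prop :=
  ∀ y z, G.dist y z = 3 → ∃ K₂ K₃ : ℝ, ∀ u,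
    ∑ w ∈ neighborsAt G z y 2, (b ^ G.dist u w)⁻¹ - ∑ w ∈ neighborsAt G y z 2, (b ^ G.dist u w)⁻¹
      = K₂ * ((b ^ G.dist u z)⁻¹ - (b ^ G.dist u y)⁻¹) ∧
    ∑ w ∈ neighborsAt G z y 3, (b ^ G.dist u w)⁻¹ - ∑ w ∈ neighborsAt G y z 3, (b ^ G.dist u w)⁻¹
      = K₃ * ((b ^ G.dist u z)⁻¹ - (b ^ G.dist u y)⁻¹)

theorem HasClassicalParams.isBalanced {α β : ℝ} (hcp : HasClassicalParams D p b α β)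
    (hb' : b ≠ 1) (hG : IsDRG G D p) : IsBalanced G b := by
  classical
  intro y z hyz
  have hb : b ≠ 0 := hcp.1
  have hD : 3 ≤ D := hyz ▸ hG.dist_le y z
  have hβ : b + b⁻¹ ≠ 0 := fun h ↦ by
    field_simp at h
    nlinarith [sq_nonneg b]
  have hβ' : b + b⁻¹ + 1 ≠ 0 := fun h ↦ by
    field_simp at h
    nlinarith [sq_nonneg (b + 1), sq_nonneg b]
  obtain ⟨w, hzw, -⟩ := exists_adj_dist_eq hG.connected hyz
  obtain ⟨γ, ρ, hcomm⟩ :=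
    (hcp.realizes hb' hG (by omega)).exists_commute_askeyWilson hG hb hb' hzw
  obtain ⟨K₂, K₃, hK⟩ := hG.exists_balanced hyz hβ hβ' γ ρ
  refine ⟨K₂, K₃, fun u ↦ ?_⟩
  simpa only [radial, classicalArray, zpow_natCast] using hK _ (hcomm u)

lemma IsDRG.dist_eq_two_of_mem_neighborsAt (hG : IsDRG G D p) (ha1 : p 1 1 1 = 0)
    (hxu : G.Adj x u) {j : ℕ} (hyu : G.dist y u ≠ j) :
    ∀ w ∈ neighborsAt G x y j, G.dist u w = 2 := by
  intro w hw
  obtain ⟨hxw, hyw⟩ := mem_neighborsAt.1 hw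
  exact hG.dist_eq_two_of_adj_of_adj ha1 hxu hxw fun h ↦ hyu (h ▸ hyw)

lemma IsDRG.sum_neighborsAt_inv_pow (hG : IsDRG G D p) {j n : ℕ} (hD : 1 ≤ D) (hj : j ≤ D)
    (hn : ∀ w ∈ neighborsAt G x y j, G.dist u w = n) :
    ∑ w ∈ neighborsAt G x y j, (b ^ G.dist u w)⁻¹ = p (G.dist x y) 1 j * (b ^ n)⁻¹ := by
  rw [← hG.card_neighborsAt hD hj, ← nsmul_eq_mul]
  exact sum_eq_card_nsmul fun w hw ↦ by rw [hn w hw]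

lemma eq_add_one_of_sum_inv_pow_eq {ι : Type*} {S : Finset ι} {d : ι → ℕ} {n : ℕ} (hb : b ≠ 0)
    (hb' : b ≠ 1) (hd : ∀ i ∈ S, d i = n ∨ d i = n + 1)
    (hsum : ∑ i ∈ S, (b ^ d i)⁻¹ = #S * (b ^ (n + 1))⁻¹) : ∀ i ∈ S, d i = n + 1 := by
  have hne : (b ^ n)⁻¹ - (b ^ (n + 1))⁻¹ ≠ 0 := by
    rw [sub_ne_zero, Ne, _root_.inv_inj, pow_succ, eq_comm, mul_eq_left₀ (pow_ne_zero n hb)]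
    exact hb'
  have hterm : ∀ i ∈ S, (b ^ d i)⁻¹ - (b ^ (n + 1))⁻¹
      = if d i = n then (b ^ n)⁻¹ - (b ^ (n + 1))⁻¹ else 0 := fun i hi ↦ by
    obtain h | h := hd i hi <;> simp [h]
  rw [← sub_eq_zero, ← nsmul_eq_mul, ← sum_const, ← sum_sub_distrib, sum_congr rfl hterm,
    ← sum_filter, sum_const, smul_eq_zero, card_eq_zero, filter_eq_empty_iff] at hsum
  exact fun i hi ↦ (hd i hi).resolve_left (hsum.resolve_right hne hi)

/-- The balance over `A(y, x)` and `A(x, y)` seen from `y` determines the constant; seen from `q` it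
then says that the vertices of `A(y, x)` are on average at distance `4` from `q`. -/
lemma IsBalanced.sum_inv_pow_eq (hbal : IsBalanced G b) (hG : IsDRG G D p) (ha1 : p 1 1 1 = 0)
    {q : V} (hxy : G.dist x y = 3) (hxq : G.Adj x q) (hyq : G.dist y q = 4) :
    ∑ w ∈ neighborsAt G y x 3, (b ^ G.dist q w)⁻¹ = p 3 1 3 * (b ^ 4)⁻¹ := by
  have hD : 3 ≤ D := hxy ▸ hG.dist_le x y
  have hyx : G.dist y x = 3 := G.dist_comm.trans hxy
  have hqx : G.dist q x = 1 := SimpleGraph.dist_eq_one_iff_adj.2 hxq.symm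
  obtain ⟨_, K, hK⟩ := hbal x y hxy
  have hfrom_y := (hK y).2
  rw [hG.sum_neighborsAt_inv_pow (n := 1) (by omega) hD fun w hw ↦
      SimpleGraph.dist_eq_one_iff_adj.2 (mem_neighborsAt.1 hw).1,
    hG.sum_neighborsAt_inv_pow (n := 3) (by omega) hD fun w hw ↦ (mem_neighborsAt.1 hw).2,
    SimpleGraph.dist_self, hyx, hxy] at hfrom_y
  have hfrom_q := (hK q).2
  rw [hG.sum_neighborsAt_inv_pow (by omega) hD
      (hG.dist_eq_two_of_mem_neighborsAt ha1 hxq (by omega)),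
    G.dist_comm (u := q) (v := y), hyq, hqx, hxy] at hfrom_q
  simp only [← inv_pow] at hfrom_y hfrom_q ⊢
  linear_combination hfrom_q + b⁻¹ * hfrom_y

lemma IsBalanced.Bset_subset (hbal : IsBalanced G b) (hb : b ≠ 0) (hb' : b ≠ 1)
    (hG : IsDRG G D p) (ha1 : p 1 1 1 = 0) (hxy : G.dist x y = 3) (hxu : G.dist x u = 3)
    (hyu : G.Adj y u) : Bset G x y ⊆ Bset G x u := by
  rintro q ⟨hxq, hyq⟩
  have hD : 3 ≤ D := hxy ▸ hG.dist_le x y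
  have hadj : G.Adj x q := SimpleGraph.dist_eq_one_iff_adj.1 hxq
  rw [hxy] at hyq
  have hnear : ∀ w ∈ neighborsAt G y x 3, G.dist q w = 3 ∨ G.dist q w = 4 := fun w hw ↦ by
    obtain ⟨hyw, hxw⟩ := mem_neighborsAt.1 hw
    have h₁ := dist_le_dist_add_one_of_adj (u := q) hG.connected hyw.symm
    have h₂ := dist_le_dist_add_one_of_adj (u := w) hG.connected hadj
    simp only [G.dist_comm (u := q) (v := y), G.dist_comm (u := w)] at h₁ h₂
    omega
  have hcard : #(neighborsAt G y x 3) = p 3 1 3 := by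
    rw [hG.card_neighborsAt (by omega) hD, G.dist_comm, hxy]
  have hfar := eq_add_one_of_sum_inv_pow_eq hb hb' hnear
    (by rw [hcard, hbal.sum_inv_pow_eq hG ha1 hxy hadj hyq])
  exact ⟨hxq, by rw [hxu, G.dist_comm, hfar u (mem_neighborsAt.2 ⟨hyu, hxu⟩)]⟩

/-- Otherwise `C(y, v)` lies at distance `2` from `x`, as does `C(v, y)`, so the balance seen from
`x` forces the constant to vanish, which contradicts the balance seen from `y`. -/
lemma IsBalanced.exists_adj_dist_eq_two (hbal : IsBalanced G b) (hb : b ≠ 0) (hb' : b ≠ 1)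
    (hbm : b ≠ -1) (hG : IsDRG G D p) (ha1 : p 1 1 1 = 0) (hxy : G.dist x y = 3)
    (hxv : G.Adj x v) (hyv : G.dist y v = 3) :
    ∃ z, G.Adj y z ∧ G.dist v z = 2 ∧ G.dist x z = 3 := by
  by_contra! hcon
  have hD : 3 ≤ D := hxy ▸ hG.dist_le x y
  have hvy : G.dist v y = 3 := G.dist_comm.trans hyv
  obtain ⟨K, _, hK⟩ := hbal v y hvy
  have hfrom_y := (hK y).1
  rw [hG.sum_neighborsAt_inv_pow (n := 1) (by omega) (by omega) fun w hw ↦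
      SimpleGraph.dist_eq_one_iff_adj.2 (mem_neighborsAt.1 hw).1,
    hG.sum_neighborsAt_inv_pow (n := 2) (by omega) (by omega) fun w hw ↦ (mem_neighborsAt.1 hw).2,
    SimpleGraph.dist_self, hyv, hvy] at hfrom_y
  have hfrom_x := (hK x).1
  have hnear : ∀ w ∈ neighborsAt G y v 2, G.dist x w = 2 := fun w hw ↦ by
    obtain ⟨hyw, hvw⟩ := mem_neighborsAt.1 hw
    have h₁ := dist_le_dist_add_one_of_adj (u := x) hG.connected hyw.symm
    have h₂ := dist_le_dist_add_one_of_adj (u := w) hG.connected hxv.symm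
    have h₃ := hcon w hyw hvw
    simp only [G.dist_comm (u := w)] at h₂
    omega
  rw [hG.sum_neighborsAt_inv_pow (by omega) (by omega) hnear,
    hG.sum_neighborsAt_inv_pow (by omega) (by omega)
      (hG.dist_eq_two_of_mem_neighborsAt ha1 hxv.symm (by rw [G.dist_comm]; omega)),
    SimpleGraph.dist_eq_one_iff_adj.2 hxv, hxy, hyv, hvy, sub_self] at hfrom_x
  have hne : (b ^ 3)⁻¹ - (b ^ 1)⁻¹ ≠ 0 := fun h ↦ by
    have hprod : (b - 1) * (b + 1) = 0 := by
      field_simp at h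
      linear_combination -h
    obtain h | h := mul_eq_zero.1 hprod
    · exact hb' (sub_eq_zero.1 h)
    · exact hbm (eq_neg_of_add_eq_zero_left h)
  rw [(mul_eq_zero.1 hfrom_x.symm).resolve_right hne, zero_mul, ← mul_sub, mul_eq_zero,
    Nat.cast_eq_zero, sub_eq_zero, _root_.inv_inj, pow_one, pow_two, left_eq_mul₀ hb] at hfrom_y
  exact hfrom_y.elim (hG.intersection_lower_ne_zero hvy) hb'

end Balanced

section Delta

variable {G : SimpleGraph V} {x y : V}

lemma Bset_inter_Delta : Bset G x y ∩ Delta G x y = ∅ := by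
  rw [Set.eq_empty_iff_forall_notMem]
  rintro v ⟨hv, z, ⟨-, hB⟩, hgeod⟩
  obtain ⟨hxv, hzv⟩ := hB ▸ hv
  rw [G.dist_comm (u := v)] at hgeod
  omega

lemma Cset_subset_Delta (hxy : G.dist x y = 3) : Cset G x y ⊆ Delta G x y := by
  rintro v ⟨hxv, hyv⟩
  refine ⟨y, ⟨hxy, rfl⟩, ?_⟩
  rw [G.dist_comm (u := v)]
  omega

lemma sphere_one_eq_union (hG : G.Connected) (x y : V) :
    {v | G.dist x v = 1} = Cset G x y ∪ Aset G x y ∪ Bset G x y := by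
  ext v
  simp only [Cset, Aset, Bset, Set.mem_union, Set.mem_ofPred_eq, ← and_or_left, iff_self_and]
  intro hxv
  have hadj := SimpleGraph.dist_eq_one_iff_adj.1 hxv
  have h₁ := dist_le_dist_add_one_of_adj (u := y) hG hadj
  have h₂ := dist_le_dist_add_one_of_adj (u := y) hG hadj.symm
  rw [G.dist_comm (u := x) (v := y)]
  omega

variable [Finite V] {D : ℕ} {p : ℕ → ℕ → ℕ → ℕ} {b α β : ℝ}

lemma HasClassicalParams.Aset_subset_Delta (hcp : HasClassicalParams D p b α β)
    (hG : IsDRG G D p) (ha1 : p 1 1 1 = 0) (ha2 : p 2 1 2 ≠ 0) (hxy : G.dist x y = 3) :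
    Aset G x y ⊆ Delta G x y := by
  classical
  have := Fintype.ofFinite V
  rintro v ⟨hxv, hyv⟩
  have hb' : b ≠ 1 := hcp.ne_one hG ha1 ha2 hxy
  have hbal : IsBalanced G b := hcp.isBalanced hb' hG
  obtain ⟨z, hyz, hvz, hxz⟩ := hbal.exists_adj_dist_eq_two hcp.1 hb' hcp.2.1 hG ha1 hxy
    (SimpleGraph.dist_eq_one_iff_adj.1 hxv) (hyv.trans hxy)
  refine ⟨z, ⟨hxz, ?_⟩, by omega⟩
  exact (hbal.Bset_subset hcp.1 hb' hG ha1 hxz hxy hyz.symm).antisymm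
    (hbal.Bset_subset hcp.1 hb' hG ha1 hxy hxz hyz)

lemma IsDRG.ncard_Cset_union_Aset (hG : IsDRG G D p) (hxy : G.dist x y = 3) :
    (Cset G x y ∪ Aset G x y).ncard = p 3 1 3 + p 3 1 2 := by
  have hD : 3 ≤ D := hxy ▸ hG.dist_le x y
  have hdisj : Disjoint (Cset G x y) (Aset G x y) :=
    Set.disjoint_left.2 fun v ⟨_, hC⟩ ⟨_, hA⟩ ↦ by omega
  rw [Set.ncard_union_eq hdisj, add_comm]
  simp only [Aset, Cset, hxy]
  rw [hG.distRegular 3 1 3 hD (by omega) hD x y hxy,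
    hG.distRegular 3 1 2 hD (by omega) (by omega) x y hxy]

theorem Delta_inter_sphere_one_general (hG : IsDRG G D p) (hcp : HasClassicalParams D p b α β)
    (ha1 : p 1 1 1 = 0) (ha2 : p 2 1 2 ≠ 0) (hxy : G.dist x y = 3) :
    Bset G x y ∩ Delta G x y = ∅ ∧
    {v : V | G.dist x v = 1} ∩ Delta G x y = Cset G x y ∪ Aset G x y ∧
    ({v : V | G.dist x v = 1} ∩ Delta G x y).ncard = p 3 1 3 + p 3 1 2 := by
  have hsub : Cset G x y ∪ Aset G x y ⊆ Delta G x y :=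
    Set.union_subset (Cset_subset_Delta hxy) (hcp.Aset_subset_Delta hG ha1 ha2 hxy)
  have hinter : {v | G.dist x v = 1} ∩ Delta G x y = Cset G x y ∪ Aset G x y := by
    rw [sphere_one_eq_union hG.connected x y, Set.union_inter_distrib_right, Bset_inter_Delta,
      Set.union_empty, Set.inter_eq_left.2 hsub]
  exact ⟨Bset_inter_Delta, hinter, hinter ▸ hG.ncard_Cset_union_Aset hxy⟩

end Delta

/-- Classical parameters `(D, b, α, β)`, `D ≥ 4`, `a₁ = 0`, `a₂ ≠ 0`,
`∂(x,y) = 3`, `Δ = [x, C]`. Then `B(x,y) ∩ Δ = ∅` and `Γ₁(x) ∩ Δ = C(x,y) ∪ A(x,y)`;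
in particular `|Γ₁(x) ∩ Δ| = a₃ + c₃` (`= p³₁₃ + p³₁₂`). -/
theorem Delta_inter_sphere_one [Fintype V] (G : SimpleGraph V) (hconn : G.Connected)
    (D : ℕ) (hD : 4 ≤ D)
    (hdiam_le : ∀ x y : V, G.dist x y ≤ D) (hdiam : ∃ x y : V, G.dist x y = D)
    (p : ℕ → ℕ → ℕ → ℕ) (hdr : G.IsDistRegularWith D p)
    (b α β : ℝ) (hcp : HasClassicalParams D p b α β)
    (ha1 : p 1 1 1 = 0) (ha2 : p 2 1 2 ≠ 0)
    (x y : V) (hxy : G.dist x y = 3) :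
    Bset G x y ∩ Delta G x y = ∅ ∧
    {v : V | G.dist x v = 1} ∩ Delta G x y = Cset G x y ∪ Aset G x y ∧
    ({v : V | G.dist x v = 1} ∩ Delta G x y).ncard = p 3 1 3 + p 3 1 2 :=
  Delta_inter_sphere_one_general ⟨hconn, hdiam_le, hdr⟩ hcp ha1 ha2 hxy
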